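/- For every integer n ≥ 2, the homogeneous Narayana polynomials satisfy N^B_n(x,y) = (x+y)·N^B_{n-1}(x,y) + 2·Σ_{k=0}^{n-2} N^B_k(x,y)·N^A_{n-k-1}(x,y). -/

import Mathlib

open MvPolynomial

/-- The homogeneous Narayana polynomial of type A (`X 0` is `x`, `X 1` is `y`). -/
noncomputable def narayanaA2 (n : ℕ) : MvPolynomial (Fin 2) ℚ :=
  if n = 0 then X 1
  else ∑ k ∈ Finset.Icc 1 n,
    C ((n.choose k * n.choose (k - 1) : ℚ) / n) * X 0 ^ k * X 1 ^ (n - k + 1)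

/-- The homogeneous Narayana polynomial of type B:
`N^B_n(x,y) = ∑_{k=0}^n C(n,k)² x^k y^{n-k}`. -/
noncomputable def narayanaB2 (n : ℕ) : MvPolynomial (Fin 2) ℚ :=
  ∑ k ∈ Finset.range (n + 1), C ((n.choose k : ℚ) ^ 2) * X 0 ^ k * X 1 ^ (n - k)

/-- Abstract convolution lemma through generating functions. -/
theorem nar_abstract {R : Type*} [CommRing R] [Algebra ℚ R] [IsDomain R] (s d : R) (A B : ℕ → R)
    (h0 : B 0 = 1) (h1 : B 1 = s)
    (hrec : ∀ n : ℕ, ((n : R) + 2) * B (n + 2) =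
      (2 * (n : R) + 3) * (s * B (n + 1)) - ((n : R) + 1) * (d * B n))
    (hA : ∀ n : ℕ, 2 * A (n + 1) = -(B (n + 2) - 2 * (s * B (n + 1)) + d * B n)) (m : ℕ) :
    B (m + 2) = s * B (m + 1) + 2 * ∑ k ∈ Finset.range (m + 1), B k * A (m + 1 - k) := by
  have : CharZero R := algebraRat.charZero R
  let G : PowerSeries R := PowerSeries.mk B
  let f : ℕ → R := fun n => match n with
    | 0 => 1
    | 1 => -s
    | n + 2 => -(2 * A (n + 1))
  let F : PowerSeries R := PowerSeries.mk f
  let D : PowerSeries R :=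
    1 - PowerSeries.C (2 * s) * PowerSeries.X
      + PowerSeries.C d * (PowerSeries.X * PowerSeries.X)
  have hD : ∀ P : PowerSeries R, D * P = P - PowerSeries.C (2 * s) * (PowerSeries.X * P)
      + PowerSeries.C d * (PowerSeries.X * (PowerSeries.X * P)) := by
    intro P; simp only [D]; ring
  have hF : F = D * G := by
    rw [hD]
    ext n
    rcases n with _ | _ | n
    · simp [F, G, f, h0, PowerSeries.coeff_zero_X_mul]
    · simp only [map_add, map_sub, PowerSeries.coeff_C_mul, PowerSeries.coeff_succ_X_mul,
        PowerSeries.coeff_zero_X_mul, F, G, PowerSeries.coeff_mk, f, h0, h1]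
      ring
    · simp only [map_add, map_sub, PowerSeries.coeff_C_mul, PowerSeries.coeff_succ_X_mul,
        F, G, PowerSeries.coeff_mk, f, hA]
      ring
  have hG : D * PowerSeries.derivative R G =
      PowerSeries.C s * G - PowerSeries.C d * (PowerSeries.X * G) := by
    rw [hD]
    ext n
    rcases n with _ | _ | n
    · simp only [map_add, map_sub, PowerSeries.coeff_C_mul,
        PowerSeries.coeff_zero_X_mul, G, PowerSeries.coeff_mk, h0, h1,
        PowerSeries.coeff_derivative]
      push_cast
      ring
    · have := hrec 0
      simp only [map_add, map_sub, PowerSeries.coeff_C_mul, PowerSeries.coeff_succ_X_mul,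
        PowerSeries.coeff_zero_X_mul, G, PowerSeries.coeff_mk, h0, h1,
        PowerSeries.coeff_derivative] at this ⊢
      push_cast at this ⊢
      linear_combination this
    · have := hrec (n + 1)
      simp only [map_add, map_sub, PowerSeries.coeff_C_mul, PowerSeries.coeff_succ_X_mul,
        G, PowerSeries.coeff_mk, PowerSeries.coeff_derivative] at this ⊢
      push_cast at this ⊢
      linear_combination this
  have hD' : PowerSeries.derivative R D =
      -(2 * PowerSeries.C s) + 2 * (PowerSeries.C d * PowerSeries.X) := by
    simp only [D, map_add, map_sub, Derivation.leibniz, PowerSeries.derivative_C,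
      PowerSeries.derivative_X, smul_eq_mul, Derivation.map_one_eq_zero]
    rw [map_mul, map_ofNat]
    ring
  have hone : G * F = 1 := by
    apply PowerSeries.derivative.ext
    · rw [hF]
      simp only [Derivation.leibniz, smul_eq_mul, Derivation.map_one_eq_zero, hD']
      linear_combination (2 * G) * hG
    · simp [F, G, f, h0]
  have hc := congrArg (PowerSeries.coeff (m + 2)) hone
  rw [PowerSeries.coeff_mul, Finset.Nat.sum_antidiagonal_eq_sum_range_succ_mk,
    Finset.sum_range_succ, Finset.sum_range_succ, PowerSeries.coeff_one] at hc
  have e : ∑ k ∈ Finset.range (m + 1),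
      PowerSeries.coeff k G * PowerSeries.coeff (m + 2 - k) F =
      -(2 * ∑ k ∈ Finset.range (m + 1), B k * A (m + 1 - k)) := by
    rw [Finset.mul_sum, ← Finset.sum_neg_distrib]
    refine Finset.sum_congr rfl fun k hk => ?_
    have hk' : k ≤ m := by simpa [Nat.lt_succ_iff] using hk
    obtain ⟨r, rfl⟩ := Nat.exists_eq_add_of_le hk'
    rw [show k + r + 2 - k = r + 2 by omega, show k + r + 1 - k = r + 1 by omega]
    simp only [F, G, f, PowerSeries.coeff_mk]
    ring
  simp only [e] at hc
  rw [show m + 1 + 1 = m + 2 by rfl, show m + 2 - (m + 1) = 1 by omega,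
    show m + 2 - (m + 2) = 0 by omega] at hc
  simp [F, G, f] at hc
  linear_combination hc

/-- Homogeneous polynomial of degree `n` with coefficients `f i j`. -/
noncomputable def narS (n : ℕ) (f : ℕ → ℕ → ℚ) : MvPolynomial (Fin 2) ℚ :=
  ∑ p ∈ Finset.HasAntidiagonal.antidiagonal n, C (f p.1 p.2) * X 0 ^ p.1 * X 1 ^ p.2

theorem narS_X0 (n : ℕ) (f g : ℕ → ℕ → ℚ) (h0 : g 0 (n + 1) = 0)
    (h : ∀ i j, i + j = n → g (i + 1) j = f i j) : X 0 * narS n f = narS (n + 1) g := by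
  unfold narS
  rw [Finset.Nat.sum_antidiagonal_succ, Finset.mul_sum]
  simp only [h0, map_zero, zero_mul, zero_add]
  refine Finset.sum_congr rfl fun p hp => ?_
  rw [h _ _ (Finset.HasAntidiagonal.mem_antidiagonal.1 hp)]
  ring

theorem narS_X1 (n : ℕ) (f g : ℕ → ℕ → ℚ) (h0 : g (n + 1) 0 = 0)
    (h : ∀ i j, i + j = n → g i (j + 1) = f i j) : X 1 * narS n f = narS (n + 1) g := by
  unfold narS
  rw [Finset.Nat.sum_antidiagonal_succ', Finset.mul_sum]
  simp only [h0, map_zero, zero_mul, zero_add]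
  refine Finset.sum_congr rfl fun p hp => ?_
  rw [h _ _ (Finset.HasAntidiagonal.mem_antidiagonal.1 hp)]
  ring

theorem narS_congr (n : ℕ) (f g : ℕ → ℕ → ℚ) (h : ∀ i j, i + j = n → f i j = g i j) :
    narS n f = narS n g :=
  Finset.sum_congr rfl fun p hp => by rw [h _ _ (Finset.HasAntidiagonal.mem_antidiagonal.1 hp)]

theorem narS_add (n : ℕ) (f g : ℕ → ℕ → ℚ) :
    narS n f + narS n g = narS n (fun i j => f i j + g i j) := by
  unfold narS
  rw [← Finset.sum_add_distrib]
  exact Finset.sum_congr rfl fun p _ => by rw [C_add]; ring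

theorem narS_smul (n : ℕ) (a : ℚ) (f : ℕ → ℕ → ℚ) :
    C a * narS n f = narS n (fun i j => a * f i j) := by
  unfold narS
  rw [Finset.mul_sum]
  exact Finset.sum_congr rfl fun p _ => by rw [C_mul]; ring

/-- Squared binomial coefficient. -/
def narb (i j : ℕ) : ℚ := (((i + j).choose i : ℕ) : ℚ) ^ 2

theorem narc_left (i j : ℕ) : (((i + 1 + j).choose (i + 1) : ℕ) : ℚ) * (i + 1) =
    ((i + j).choose i : ℕ) * (i + j + 1) := by
  have := Nat.add_one_mul_choose_eq (i + j) i
  rw [show i + 1 + j = i + j + 1 by omega]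
  have h : (((i + j + 1) * (i + j).choose i : ℕ) : ℚ) = _ := congrArg _ this
  push_cast at h
  linear_combination -h

theorem narc_right (i j : ℕ) : (((i + (j + 1)).choose i : ℕ) : ℚ) * (j + 1) =
    ((i + j).choose i : ℕ) * (i + j + 1) := by
  have := narc_left j i
  rw [show i + (j + 1) = j + 1 + i by omega, Nat.choose_symm_add.symm, this,
    Nat.add_comm i j, Nat.choose_symm_add]
  ring

theorem narb_left (i j : ℕ) : narb (i + 1) j * (i + 1) ^ 2 = narb i j * (i + j + 1) ^ 2 := by
  unfold narb
  rw [← mul_pow, ← mul_pow, narc_left]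

theorem narb_right (i j : ℕ) : narb i (j + 1) * (j + 1) ^ 2 = narb i j * (i + j + 1) ^ 2 := by
  unfold narb
  rw [← mul_pow, ← mul_pow, narc_right]

theorem narB_eq (n : ℕ) : narayanaB2 n = narS n narb := by
  unfold narayanaB2 narS
  rw [Finset.Nat.sum_antidiagonal_eq_sum_range_succ_mk]
  refine Finset.sum_congr rfl fun k hk => ?_
  have : k ≤ n := by simpa [Nat.lt_succ_iff] using hk
  simp only [narb]
  rw [show k + (n - k) = n by omega]

theorem narA_eq (n : ℕ) : narayanaA2 (n + 1) =
    narS (n + 2) (fun i j => narb i j * i * j / (((i : ℚ) + j) ^ 2 * (i + j - 1))) := by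
  unfold narayanaA2 narS
  rw [if_neg (by omega), Finset.Nat.sum_antidiagonal_eq_sum_range_succ_mk,
    Finset.sum_range_succ, Finset.sum_range_succ']
  simp only [Nat.sub_self, Nat.cast_zero, mul_zero, zero_div, zero_mul, map_zero, add_zero]
  rw [Finset.range_eq_Ico, Finset.sum_Ico_add' (fun k => C (narb k (n + 2 - k) * (k : ℚ) *
    ((n + 2 - k : ℕ) : ℚ) / (((k : ℚ) + ((n + 2 - k : ℕ) : ℚ)) ^ 2 *
      ((k : ℚ) + ((n + 2 - k : ℕ) : ℚ) - 1))) * (X 0 : MvPolynomial (Fin 2) ℚ) ^ k *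
      X 1 ^ (n + 2 - k)) 0 (n + 1) 1]
  refine Finset.sum_congr (by ext; simp) fun k hk => ?_
  obtain ⟨hk1, hk2⟩ : 1 ≤ k ∧ k ≤ n + 1 := by simpa using hk
  obtain ⟨i, rfl⟩ := Nat.exists_eq_add_of_le' hk1
  obtain ⟨j, rfl⟩ : ∃ j, n = i + j := Nat.exists_eq_add_of_le (by omega)
  rw [show i + j + 1 - (i + 1) + 1 = j + 1 by omega, show i + j + 2 - (i + 1) = j + 1 by omega,
    show i + 1 - 1 = i by omega]
  congr 3
  have e1 := narc_right (i + 1) j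
  have e2 := narc_left i (j + 1)
  rw [show i + 1 + j = i + j + 1 by omega] at e1
  rw [show i + (j + 1) = i + j + 1 by omega] at e2
  have e3 : i + 1 + (j + 1) = i + j + 2 := by omega
  rw [e3] at e1 e2
  simp only [narb, e3]
  push_cast at e1 e2 ⊢
  have p1 : (i : ℚ) + 1 + (j + 1) ≠ 0 := by positivity
  have p2 : (i : ℚ) + j + 1 ≠ 0 := by positivity
  rw [show (i : ℚ) + 1 + (j + 1) - 1 = i + j + 1 by ring]
  rw [div_eq_div_iff p2 (by positivity)]
  have e4 := congrArg₂ (· * ·) e1 e2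
  linear_combination (-(i + j + 1 : ℚ)) * e4

theorem narB_X0 (n : ℕ) : X 0 * narayanaB2 n =
    narS (n + 1) (fun i j => narb i j * (i : ℚ) ^ 2 / ((i : ℚ) + j) ^ 2) := by
  rw [narB_eq]
  apply narS_X0
  · simp
  · intro i j _
    have : (i : ℚ) + 1 + j ≠ 0 := by positivity
    push_cast
    rw [narb_left]
    field_simp
    ring

theorem narB_X1 (n : ℕ) : X 1 * narayanaB2 n =
    narS (n + 1) (fun i j => narb i j * (j : ℚ) ^ 2 / ((i : ℚ) + j) ^ 2) := by
  rw [narB_eq]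
  apply narS_X1
  · simp
  · intro i j _
    have : (i : ℚ) + (j + 1) ≠ 0 := by positivity
    push_cast
    rw [narb_right]
    field_simp
    ring

/-- Coefficients after multiplying twice. -/
theorem narB_X00 (n : ℕ) : X 0 * (X 0 * narayanaB2 n) =
    narS (n + 2) (fun i j => narb i j * (i : ℚ) ^ 2 * (i - 1) ^ 2 /
      (((i : ℚ) + j) ^ 2 * (i + j - 1) ^ 2)) := by
  rw [narB_X0]
  apply narS_X0
  · simp
  · intro i j _
    have : (i : ℚ) + 1 + j ≠ 0 := by positivity
    push_cast
    rw [narb_left, show (i : ℚ) + 1 + j - 1 = i + j by ring, show (i : ℚ) + 1 - 1 = i by ring]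
    by_cases h : (i : ℚ) + j = 0
    · simp [h]
    field_simp
    ring

theorem narB_X01 (n : ℕ) : X 0 * (X 1 * narayanaB2 n) =
    narS (n + 2) (fun i j => narb i j * (i : ℚ) ^ 2 * j ^ 2 /
      (((i : ℚ) + j) ^ 2 * (i + j - 1) ^ 2)) := by
  rw [narB_X1]
  apply narS_X0
  · simp
  · intro i j _
    have : (i : ℚ) + 1 + j ≠ 0 := by positivity
    push_cast
    rw [narb_left, show (i : ℚ) + 1 + j - 1 = i + j by ring]
    by_cases h : (i : ℚ) + j = 0
    · simp [h]
    field_simp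
    ring

theorem narB_X11 (n : ℕ) : X 1 * (X 1 * narayanaB2 n) =
    narS (n + 2) (fun i j => narb i j * (j : ℚ) ^ 2 * (j - 1) ^ 2 /
      (((i : ℚ) + j) ^ 2 * (i + j - 1) ^ 2)) := by
  rw [narB_X1]
  apply narS_X1
  · simp
  · intro i j _
    have : (i : ℚ) + (j + 1) ≠ 0 := by positivity
    push_cast
    rw [narb_right, show (i : ℚ) + (j + 1) - 1 = i + j by ring, show (j : ℚ) + 1 - 1 = j by ring]
    by_cases h : (i : ℚ) + j = 0
    · simp [h]
    field_simp
    ring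

theorem narB_rec (n : ℕ) : C ((n : ℚ) + 2) * narayanaB2 (n + 2) =
    C (2 * (n : ℚ) + 3) * (X 0 * narayanaB2 (n + 1) + X 1 * narayanaB2 (n + 1))
    + C (-((n : ℚ) + 1)) * (X 0 * (X 0 * narayanaB2 n) + C (-2) * (X 0 * (X 1 * narayanaB2 n))
      + X 1 * (X 1 * narayanaB2 n)) := by
  rw [narB_X00, narB_X01, narB_X11, narB_X0, narB_X1, narB_eq]
  simp only [narS_add, narS_smul]
  apply narS_congr
  intro i j h
  have hn : (n : ℚ) = i + j - 2 := by
    have : ((i + j : ℕ) : ℚ) = ((n + 2 : ℕ) : ℚ) := by rw [h]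
    push_cast at this; linarith
  have h1 : (i : ℚ) + j ≠ 0 := by
    have : (0 : ℚ) ≤ n := by positivity
    linarith
  have h2 : (i : ℚ) + j - 1 ≠ 0 := by
    have : (0 : ℚ) ≤ n := by positivity
    linarith
  rw [hn]
  field_simp
  ring

theorem narA_rec (n : ℕ) : C 2 * narayanaA2 (n + 1) =
    C (-1) * narayanaB2 (n + 2) + C 2 * (X 0 * narayanaB2 (n + 1) + X 1 * narayanaB2 (n + 1))
    + C (-1) * (X 0 * (X 0 * narayanaB2 n) + C (-2) * (X 0 * (X 1 * narayanaB2 n))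
      + X 1 * (X 1 * narayanaB2 n)) := by
  rw [narB_X00, narB_X01, narB_X11, narB_X0, narB_X1, narB_eq, narA_eq]
  simp only [narS_add, narS_smul]
  apply narS_congr
  intro i j h
  have hn : (n : ℚ) = i + j - 2 := by
    have : ((i + j : ℕ) : ℚ) = ((n + 2 : ℕ) : ℚ) := by rw [h]
    push_cast at this; linarith
  have h1 : (i : ℚ) + j ≠ 0 := by
    have : (0 : ℚ) ≤ n := by positivity
    linarith
  have h2 : (i : ℚ) + j - 1 ≠ 0 := by
    have : (0 : ℚ) ≤ n := by positivity
    linarith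
  field_simp
  ring

theorem narB_rec' (n : ℕ) : ((n : MvPolynomial (Fin 2) ℚ) + 2) * narayanaB2 (n + 2) =
    (2 * (n : MvPolynomial (Fin 2) ℚ) + 3) * ((X 0 + X 1) * narayanaB2 (n + 1))
      - ((n : MvPolynomial (Fin 2) ℚ) + 1) * ((X 0 - X 1) ^ 2 * narayanaB2 n) := by
  have := narB_rec n
  simp only [map_add, map_mul, map_neg, map_natCast, map_ofNat, map_one] at this
  linear_combination this

theorem narA_rec' (n : ℕ) : 2 * narayanaA2 (n + 1) =
    -(narayanaB2 (n + 2) - 2 * ((X 0 + X 1) * narayanaB2 (n + 1))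
      + (X 0 - X 1) ^ 2 * narayanaB2 n) := by
  have := narA_rec n
  simp only [map_neg, map_ofNat, map_one] at this
  linear_combination this

theorem narB_zero : narayanaB2 0 = 1 := by simp [narayanaB2]

theorem narB_one : narayanaB2 1 = X 0 + X 1 := by
  simp [narayanaB2, Finset.sum_range_succ, add_comm]

theorem nar_main (m : ℕ) : narayanaB2 (m + 2) = (X 0 + X 1) * narayanaB2 (m + 1) +
    2 * ∑ k ∈ Finset.range (m + 1), narayanaB2 k * narayanaA2 (m + 1 - k) :=
  nar_abstract (R := MvPolynomial (Fin 2) ℚ) (X 0 + X 1) ((X 0 - X 1) ^ 2)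
    narayanaA2 narayanaB2 narB_zero narB_one narB_rec' narA_rec' m

theorem narayanaB_convolution (n : ℕ) (hn : 2 ≤ n) :
    narayanaB2 n =
      (X 0 + X 1) * narayanaB2 (n - 1) +
        2 * ∑ k ∈ Finset.range (n - 1), narayanaB2 k * narayanaA2 (n - k - 1) := by
  obtain ⟨m, rfl⟩ := Nat.exists_eq_add_of_le' hn
  have e : ∑ k ∈ Finset.range (m + 1), narayanaB2 k * narayanaA2 (m + 2 - k - 1) =
      ∑ k ∈ Finset.range (m + 1), narayanaB2 k * narayanaA2 (m + 1 - k) := by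
    refine Finset.sum_congr rfl fun k _ => ?_
    rw [show m + 2 - k - 1 = m + 1 - k by omega]
  rw [show m + 2 - 1 = m + 1 by omega, e]
  exact nar_main m
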